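/- arXiv:1602.05080 — 2 statements merged into one kernel-verified Lean document; each statement's English description precedes it below -/
import Mathlib

section
/- Let Y be a real n×m matrix with columns y₁,…,y_m, nonzero singular values σ₁ ≥ … ≥ σ_d > 0 (d = rank(Y)), and orthonormal left singular vectors ψ₁,…,ψ_d. Then for every ℓ ≤ d and every orthonormal family φ₁,…,φ_ℓ in ℝⁿ, Σ_{j=1}^{m} ‖y_j − Σ_{i=1}^{ℓ} ⟨y_j, φ_i⟩ φ_i‖² ≥ Σ_{i=ℓ+1}^{d} σ_i²; i.e., the first ℓ left singular vectors of Y solve the POD minimization problem min over orthonormal families of Σ_{j=1}^{m} ‖y_j − Σ_{i=1}^{ℓ} ⟨y_j, φ_i⟩ φ_i‖². -/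
open Matrix BigOperators

lemma pod_sq {N D : ℕ} (u : Fin D → (Fin N → ℝ))
    (hu : ∀ i j : Fin D, u i ⬝ᵥ u j = if i = j then 1 else 0) (c : Fin D → ℝ) :
    (∑ i, c i • u i) ⬝ᵥ (∑ i, c i • u i) = ∑ i, c i ^ 2 := by
  simp [sum_dotProduct, dotProduct_sum, hu, pow_two]

lemma pod_res {N D : ℕ} (u : Fin D → (Fin N → ℝ))
    (hu : ∀ i j : Fin D, u i ⬝ᵥ u j = if i = j then 1 else 0) (x : Fin N → ℝ) :
    (x - ∑ i, (x ⬝ᵥ u i) • u i) ⬝ᵥ (x - ∑ i, (x ⬝ᵥ u i) • u i)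
      = x ⬝ᵥ x - ∑ i, (x ⬝ᵥ u i) ^ 2 := by
  have h1 : x ⬝ᵥ (∑ i, (x ⬝ᵥ u i) • u i) = ∑ i, (x ⬝ᵥ u i) ^ 2 := by
    simp [dotProduct_sum, pow_two]
  rw [sub_dotProduct, dotProduct_sub, dotProduct_sub, pod_sq u hu,
    dotProduct_comm (∑ i, (x ⬝ᵥ u i) • u i) x, h1]
  ring

lemma pod_bessel {N D : ℕ} (u : Fin D → (Fin N → ℝ))
    (hu : ∀ i j : Fin D, u i ⬝ᵥ u j = if i = j then 1 else 0) (x : Fin N → ℝ) :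
    ∑ i, (x ⬝ᵥ u i) ^ 2 ≤ x ⬝ᵥ x := by
  have h := pod_res u hu x
  have h2 : 0 ≤ (x - ∑ i, (x ⬝ᵥ u i) • u i) ⬝ᵥ (x - ∑ i, (x ⬝ᵥ u i) • u i) :=
    Finset.sum_nonneg fun i _ => mul_self_nonneg _
  linarith


/-- POD optimality: for any orthonormal family `φ₁,…,φ_ℓ` in `ℝⁿ`, the projection error of the
snapshot columns is at least the sum of the squared neglected singular values, which is attained
by the first `ℓ` left singular vectors. -/
theorem pod_optimality
    (n m d : ℕ)
    (y : Fin m → (Fin n → ℝ))              -- columns of Y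
    (σ : Fin d → ℝ)                         -- nonzero singular values
    (ψ : Fin d → (Fin n → ℝ))               -- left singular vectors
    (v : Fin d → (Fin m → ℝ))               -- right singular vectors
    (hσpos : ∀ i, 0 < σ i)
    (hσdec : ∀ i j : Fin d, i ≤ j → σ j ≤ σ i)
    (hψ : ∀ i j : Fin d, ψ i ⬝ᵥ ψ j = if i = j then 1 else 0)
    (hv : ∀ i j : Fin d, v i ⬝ᵥ v j = if i = j then 1 else 0)
    (hSVD : ∀ j : Fin m, y j = ∑ i : Fin d, (σ i * v i j) • ψ i)
    (ℓ : ℕ) (hℓd : ℓ ≤ d)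
    (φ : Fin ℓ → (Fin n → ℝ))
    (hφ : ∀ i j : Fin ℓ, φ i ⬝ᵥ φ j = if i = j then 1 else 0) :
    ∑ j : Fin m,
      (y j - ∑ i : Fin ℓ, (y j ⬝ᵥ φ i) • φ i) ⬝ᵥ
      (y j - ∑ i : Fin ℓ, (y j ⬝ᵥ φ i) • φ i)
      ≥ ∑ i ∈ Finset.univ.filter (fun i : Fin d => ℓ ≤ (i : ℕ)), (σ i) ^ 2 := by
  have hyy : ∑ j, y j ⬝ᵥ y j = ∑ k, σ k ^ 2 := by
    have : ∀ j, y j ⬝ᵥ y j = ∑ k, (σ k * v k j) ^ 2 := fun j => by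
      rw [hSVD j]; exact pod_sq ψ hψ _
    simp only [this]
    rw [Finset.sum_comm]
    refine Finset.sum_congr rfl fun k _ => ?_
    have h1 : ∑ j, v k j * v k j = 1 := by simpa [dotProduct] using hv k k
    calc ∑ j, (σ k * v k j) ^ 2 = σ k ^ 2 * ∑ j, v k j * v k j := by
          rw [Finset.mul_sum]; exact Finset.sum_congr rfl fun j _ => by ring
      _ = σ k ^ 2 := by rw [h1, mul_one]
  have hya : ∀ a : Fin n → ℝ, ∑ j, (y j ⬝ᵥ a) ^ 2 = ∑ k, σ k ^ 2 * (ψ k ⬝ᵥ a) ^ 2 := by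
    intro a
    have h := pod_sq v hv (fun k => σ k * (ψ k ⬝ᵥ a))
    simp only [mul_pow] at h
    rw [← h, dotProduct]
    refine Finset.sum_congr rfl fun j _ => ?_
    rw [hSVD j, sum_dotProduct, ← pow_two]
    congr 1
    rw [Finset.sum_apply]
    refine Finset.sum_congr rfl fun k _ => ?_
    simp only [smul_dotProduct, Pi.smul_apply, smul_eq_mul]
    ring
  set w : Fin d → ℝ := fun k => ∑ i, (ψ k ⬝ᵥ φ i) ^ 2 with hw
  have hw0 : ∀ k, 0 ≤ w k := fun k => Finset.sum_nonneg fun i _ => sq_nonneg _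
  have hw1 : ∀ k, w k ≤ 1 := fun k => by
    have := pod_bessel φ hφ (ψ k)
    rwa [hψ, if_pos rfl] at this
  have hws : ∑ k, w k ≤ ℓ := by
    simp only [hw]
    rw [Finset.sum_comm]
    calc ∑ i : Fin ℓ, ∑ k, (ψ k ⬝ᵥ φ i) ^ 2 ≤ ∑ i : Fin ℓ, (1 : ℝ) := by
          refine Finset.sum_le_sum fun i _ => ?_
          have := pod_bessel ψ hψ (φ i)
          rw [hφ, if_pos rfl] at this
          simpa only [dotProduct_comm (φ i)] using this
      _ = ℓ := by simp
  have hL : ∑ j : Fin m,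
      (y j - ∑ i : Fin ℓ, (y j ⬝ᵥ φ i) • φ i) ⬝ᵥ
      (y j - ∑ i : Fin ℓ, (y j ⬝ᵥ φ i) • φ i) = ∑ k, σ k ^ 2 * (1 - w k) := by
    simp only [pod_res φ hφ]
    rw [Finset.sum_sub_distrib, hyy, Finset.sum_comm]
    simp only [hya]
    rw [Finset.sum_comm]
    simp only [← Finset.mul_sum, mul_sub, mul_one, Finset.sum_sub_distrib, hw]
  rw [hL, ge_iff_le, Finset.sum_filter]
  obtain ⟨s, hs0, hs1, hs2⟩ : ∃ s : ℝ, 0 ≤ s ∧ (∀ k : Fin d, (k : ℕ) < ℓ → s ≤ σ k ^ 2) ∧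
      (∀ k : Fin d, ℓ ≤ (k : ℕ) → σ k ^ 2 ≤ s) := by
    rcases hℓd.lt_or_eq with h | h
    · refine ⟨σ ⟨ℓ, h⟩ ^ 2, sq_nonneg _, fun k hk => ?_, fun k hk => ?_⟩
      · exact pow_le_pow_left₀ (hσpos _).le (hσdec k ⟨ℓ, h⟩ hk.le) 2
      · exact pow_le_pow_left₀ (hσpos _).le (hσdec ⟨ℓ, h⟩ k hk) 2
    · exact ⟨0, le_rfl, fun k _ => sq_nonneg _, fun k hk => by have := k.2; omega⟩
  have hcard : ∑ k : Fin d, (if ℓ ≤ (k : ℕ) then (0 : ℝ) else 1) = ℓ := by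
    rw [Fin.sum_univ_eq_sum_range (fun k => if ℓ ≤ k then (0 : ℝ) else 1) d]
    obtain ⟨e, rfl⟩ := Nat.exists_eq_add_of_le hℓd
    rw [Finset.sum_range_add]
    rw [Finset.sum_congr rfl (g := fun _ => (1 : ℝ))
      (fun x hx => if_neg (not_le.2 (Finset.mem_range.1 hx)))]
    simp
  have hpt : ∀ k : Fin d, (if ℓ ≤ (k : ℕ) then σ k ^ 2 else 0) +
      s * ((if ℓ ≤ (k : ℕ) then (0 : ℝ) else 1) - w k) ≤ σ k ^ 2 * (1 - w k) := by
    intro k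
    split_ifs with h
    · nlinarith [mul_le_mul_of_nonneg_right (hs2 k h) (hw0 k)]
    · nlinarith [mul_le_mul_of_nonneg_right (hs1 k (not_le.1 h)) (sub_nonneg.2 (hw1 k))]
  have hsum := Finset.sum_le_sum fun k (_ : k ∈ Finset.univ) => hpt k
  rw [Finset.sum_add_distrib, ← Finset.mul_sum, Finset.sum_sub_distrib, hcard] at hsum
  have := mul_nonneg hs0 (sub_nonneg.2 hws)
  linarith
end

section
/- Let Y, Y' ∈ ℂ^{n×(m)} and suppose Y = U Σ V* is a reduced singular value decomposition with U* U = I_k, V* V = I_k, and Σ ∈ ℝ^{k×k} diagonal, invertible, with positive entries. Define the DMD operator A_y := Y' V Σ^{-1} U* (i.e. A_y = Y' Y† with Y† the Moore–Penrose pseudoinverse of Y) and the projected matrix Ã := U* Y' V Σ^{-1}. If w ∈ ℂ^k is an eigenvector of Ã with eigenvalue λ ≠ 0, i.e. Ã w = λ w and w ≠ 0, then ψ := Y' V Σ^{-1} w is nonzero and is an eigenvector of A_y with the same eigenvalue: A_y ψ = λ ψ. -/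
open Matrix BigOperators

/-- Exact DMD modes: if `w` is an eigenvector of the projected matrix `Ã = U* Y' V Σ⁻¹` with
eigenvalue `λ ≠ 0`, then `ψ = Y' V Σ⁻¹ w` is nonzero and is an eigenvector of the full DMD
operator `A_y = Y' V Σ⁻¹ U*` with the same eigenvalue. -/
theorem exact_dmd_modes
    (n m k : ℕ)
    (Y Y' : Matrix (Fin n) (Fin m) ℂ)
    (U : Matrix (Fin n) (Fin k) ℂ)
    (V : Matrix (Fin m) (Fin k) ℂ)
    (σ : Fin k → ℝ)
    (hσ : ∀ i, 0 < σ i)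
    (hU : Uᴴ * U = 1)
    (hV : Vᴴ * V = 1)
    (hSVD : Y = U * Matrix.diagonal (fun i => (σ i : ℂ)) * Vᴴ)
    (w : Fin k → ℂ) (lam : ℂ)
    (hlam : lam ≠ 0) (hw : w ≠ 0)
    (heig : (Uᴴ * Y' * V * (Matrix.diagonal (fun i => (σ i : ℂ)))⁻¹) *ᵥ w = lam • w) :
    (Y' * V * (Matrix.diagonal (fun i => (σ i : ℂ)))⁻¹) *ᵥ w ≠ 0 ∧
    (Y' * V * (Matrix.diagonal (fun i => (σ i : ℂ)))⁻¹ * Uᴴ) *ᵥ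
        ((Y' * V * (Matrix.diagonal (fun i => (σ i : ℂ)))⁻¹) *ᵥ w)
      = lam • ((Y' * V * (Matrix.diagonal (fun i => (σ i : ℂ)))⁻¹) *ᵥ w) := by
  have key : Uᴴ *ᵥ ((Y' * V * (Matrix.diagonal (fun i => (σ i : ℂ)))⁻¹) *ᵥ w) = lam • w := by
    rw [Matrix.mulVec_mulVec, ← heig]
    simp only [Matrix.mul_assoc]
  constructor
  · intro h
    rw [h, Matrix.mulVec_zero] at key
    exact (smul_ne_zero hlam hw) key.symm
  · rw [← Matrix.mulVec_mulVec _ _ Uᴴ, key, Matrix.mulVec_smul]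
end
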